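/- Let a, b, λ ≥ 0 and δ > 0 satisfy δ²λ < π². Then there exists a constant C > 0, depending only on a, b, λ, δ, with the following property: for all real numbers s₀ < s₁ with s₁ − s₀ ≤ δ and every smooth function α : ℝ² → ℝ satisfying (i) α(s, t+1) = α(s,t) for all (s,t) ∈ ℝ² (periodicity in the second variable), (ii) Δα + λα + a ≥ 0 on [s₀,s₁] × ℝ, and (iii) α(s₀,t) ≤ b and α(s₁,t) ≤ b for all t ∈ ℝ, one has α(s,t) ≤ C for all (s,t) ∈ [s₀,s₁] × ℝ. -/

import Mathlib

open Set

/-- The standard Laplacian `Δα = ∂²α/∂s² + ∂²α/∂t²` of a function `α : ℝ² → ℝ`. -/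
noncomputable def lapl (α : ℝ × ℝ → ℝ) (s t : ℝ) : ℝ :=
  deriv (deriv fun s' => α (s', t)) s + deriv (deriv fun t' => α (s, t')) t

/-!
Since `δ ^ 2 * lam < π ^ 2`, there is a frequency `w` with `lam < w ^ 2` and `w * δ < π`. Centred in
the middle of `[s₀, s₁]`, the function `cos (w * (s - m))` is bounded below by a positive constant
there, and `Δ + lam` maps it to a strictly negative function, so a large multiple `v` of it
satisfies `Δv + lam * v ≤ -a` and dominates `α` on the boundary. If the maximum `M` of `α / v` were
larger than `1`, it would be attained at an interior point; as `α - M * v` is maximal there,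
`Δα + lam * α ≤ M * (Δv + lam * v) < Δv + lam * v ≤ -a` at that point, a contradiction.
-/

open Filter

theorem deriv_deriv_nonpos_of_isLocalMax {f : ℝ → ℝ} {x : ℝ} (h : IsLocalMax f x)
    (hf : ContinuousAt f x) : deriv (deriv f) x ≤ 0 := by
  by_contra! hpos
  have hmin : IsLocalMin f x := isLocalMin_of_deriv_deriv_pos hpos h.deriv_eq_zero hf
  have hconst : f =ᶠ[nhds x] fun _ ↦ f x := by
    filter_upwards [h, hmin] with y hle hge using le_antisymm hle hge
  have hzero : deriv (deriv f) x = 0 := by simp [hconst.deriv.deriv_eq]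
  exact hpos.ne' hzero

theorem lapl_nonpos_of_isLocalMax {f : ℝ × ℝ → ℝ} {s t : ℝ} (h : IsLocalMax f (s, t))
    (hf : ContinuousAt f (s, t)) : lapl f s t ≤ 0 := by
  have hs : ContinuousAt (fun s' : ℝ ↦ (s', t)) s := by fun_prop
  have ht : ContinuousAt (fun t' : ℝ ↦ (s, t')) t := by fun_prop
  have hmax_s : IsLocalMax (fun s' ↦ f (s', t)) s := hs.eventually h
  have hmax_t : IsLocalMax (fun t' ↦ f (s, t')) t := ht.eventually h
  exact add_nonpos (deriv_deriv_nonpos_of_isLocalMax hmax_s (hf.comp_of_eq hs rfl))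
    (deriv_deriv_nonpos_of_isLocalMax hmax_t (hf.comp_of_eq ht rfl))

theorem lapl_eq_iteratedDeriv (f : ℝ × ℝ → ℝ) (s t : ℝ) :
    lapl f s t =
      iteratedDeriv 2 (fun s' ↦ f (s', t)) s + iteratedDeriv 2 (fun t' ↦ f (s, t')) t := by
  simp only [lapl, iteratedDeriv_succ, iteratedDeriv_zero]

theorem lapl_sub {f g : ℝ × ℝ → ℝ} {s t : ℝ} (hf : ContDiffAt ℝ 2 f (s, t))
    (hg : ContDiffAt ℝ 2 g (s, t)) :
    lapl (fun z ↦ f z - g z) s t = lapl f s t - lapl g s t := by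
  have hslice {h : ℝ × ℝ → ℝ} (hh : ContDiffAt ℝ 2 h (s, t)) :
      ContDiffAt ℝ 2 (fun s' ↦ h (s', t)) s ∧ ContDiffAt ℝ 2 (fun t' ↦ h (s, t')) t :=
    ⟨hh.fun_comp s (by fun_prop), hh.fun_comp t (by fun_prop)⟩
  simp only [lapl_eq_iteratedDeriv]
  rw [iteratedDeriv_fun_sub (hslice hf).1 (hslice hg).1,
    iteratedDeriv_fun_sub (hslice hf).2 (hslice hg).2]
  ring

theorem lapl_const_mul (c : ℝ) (f : ℝ × ℝ → ℝ) (s t : ℝ) :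
    lapl (fun z ↦ c * f z) s t = c * lapl f s t := by
  simp only [lapl_eq_iteratedDeriv, iteratedDeriv_const_mul_field, mul_add]

theorem lapl_cos_mul_sub (w m s t : ℝ) :
    lapl (fun z ↦ Real.cos (w * (z.1 - m))) s t = -w ^ 2 * Real.cos (w * (s - m)) := by
  have harg (x : ℝ) : HasDerivAt (fun x ↦ w * (x - m)) w x := by
    simpa using ((hasDerivAt_id x).sub_const m).const_mul w
  have hcos : deriv (fun x ↦ Real.cos (w * (x - m))) = fun x ↦ -Real.sin (w * (x - m)) * w :=
    funext fun x ↦ (harg x).cos.deriv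
  have hsin : deriv (fun x ↦ -Real.sin (w * (x - m)) * w) s =
      -(Real.cos (w * (s - m)) * w) * w := ((harg s).sin.neg.mul_const w).deriv
  simp only [lapl, hcos, hsin, deriv_const', add_zero]
  ring

theorem lapl_le_lapl_of_isLocalMax_sub {f g : ℝ × ℝ → ℝ} {s t : ℝ}
    (hf : ContDiffAt ℝ 2 f (s, t)) (hg : ContDiffAt ℝ 2 g (s, t))
    (h : IsLocalMax (fun z ↦ f z - g z) (s, t)) : lapl f s t ≤ lapl g s t := by
  rw [← sub_nonpos, ← lapl_sub hf hg]
  exact lapl_nonpos_of_isLocalMax h (hf.sub hg).continuousAt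

theorem le_of_lapl_add_mul_le {K : Set (ℝ × ℝ)} {u v c : ℝ × ℝ → ℝ}
    (hu : ContDiffOn ℝ 2 u (interior K)) (hv : ContDiffOn ℝ 2 v (interior K))
    (hmax : ∃ z ∈ K, IsMaxOn (fun z ↦ u z / v z) K z)
    (hpos : ∀ z ∈ K, 0 < v z)
    (hneg : ∀ z ∈ interior K, lapl v z.1 z.2 + c z * v z < 0)
    (hle : ∀ z ∈ interior K,
      lapl v z.1 z.2 + c z * v z ≤ lapl u z.1 z.2 + c z * u z)
    (hbdry : ∀ z ∈ K \ interior K, u z ≤ v z) :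
    ∀ z ∈ K, u z ≤ v z := by
  obtain ⟨p, hpK, hp⟩ := hmax
  set M := u p / v p
  have hup : u p = M * v p := (div_mul_cancel₀ _ (hpos p hpK).ne').symm
  have huM : ∀ z ∈ K, u z ≤ M * v z := fun z hz ↦ (div_le_iff₀ (hpos z hz)).1 (hp hz)
  suffices hM1 : M ≤ 1 from
    fun z hz ↦ (huM z hz).trans (mul_le_of_le_one_left (hpos z hz).le hM1)
  by_contra! hM1
  have hpint : p ∈ interior K := by
    by_contra hfr
    have := (div_le_one (hpos p hpK)).2 (hbdry p ⟨hpK, hfr⟩)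
    exact this.not_gt hM1
  have hnhds : interior K ∈ nhds p := isOpen_interior.mem_nhds hpint
  have hlocal : IsLocalMax (fun z ↦ u z - M * v z) p := by
    filter_upwards [hnhds] with z hz
    simpa [hup] using huM z (interior_subset hz)
  have hlapl : lapl u p.1 p.2 ≤ M * lapl v p.1 p.2 := by
    rw [← lapl_const_mul]
    exact lapl_le_lapl_of_isLocalMax_sub (hu.contDiffAt hnhds)
      (contDiffAt_const.mul (hv.contDiffAt hnhds)) hlocal
  have := calc
    lapl u p.1 p.2 + c p * u p
      ≤ M * (lapl v p.1 p.2 + c p * v p) := by rw [hup]; linarith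
    _ < lapl v p.1 p.2 + c p * v p := mul_lt_of_one_lt_left (hneg p hpint) hM1
  exact this.not_ge (hle p hpint)

theorem exists_isMaxOn_prod_univ_of_periodic {X Y : Type*} [TopologicalSpace X]
    [TopologicalSpace Y] [LinearOrder Y] [ClosedIciTopology Y]
    {K : Set X} (hK : IsCompact K) (hne : K.Nonempty) {f : X × ℝ → Y} {T : ℝ} (hT : 0 < T)
    (hf : ContinuousOn f (K ×ˢ univ))
    (hper : ∀ x ∈ K, Function.Periodic (fun t ↦ f (x, t)) T) :
    ∃ z ∈ K ×ˢ univ, IsMaxOn f (K ×ˢ univ) z := by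
  have hsub : K ×ˢ Icc 0 T ⊆ K ×ˢ univ := prod_mono_right (subset_univ _)
  obtain ⟨p, hp, hmax⟩ := (hK.prod isCompact_Icc).exists_isMaxOn
    (hne.prod (nonempty_Icc.2 hT.le)) (hf.mono hsub)
  refine ⟨p, hsub hp, fun ⟨x, t⟩ ⟨hx, _⟩ ↦ ?_⟩
  obtain ⟨t', ht', heq⟩ := (hper x hx).exists_mem_Ico₀ hT t
  exact heq.trans_le (hmax ⟨hx, Ico_subset_Icc_self ht'⟩)

theorem le_of_lapl_add_mul_le_of_periodic {s₀ s₁ T : ℝ} {u v c : ℝ × ℝ → ℝ} (hT : 0 < T)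
    (hu : ContinuousOn u (Icc s₀ s₁ ×ˢ univ)) (hv : ContinuousOn v (Icc s₀ s₁ ×ˢ univ))
    (hu₂ : ContDiffOn ℝ 2 u (Ioo s₀ s₁ ×ˢ univ)) (hv₂ : ContDiffOn ℝ 2 v (Ioo s₀ s₁ ×ˢ univ))
    (hu_per : ∀ s ∈ Icc s₀ s₁, Function.Periodic (fun t ↦ u (s, t)) T)
    (hv_per : ∀ s ∈ Icc s₀ s₁, Function.Periodic (fun t ↦ v (s, t)) T)
    (hpos : ∀ z ∈ Icc s₀ s₁ ×ˢ univ, 0 < v z)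
    (hneg : ∀ z ∈ Ioo s₀ s₁ ×ˢ univ, lapl v z.1 z.2 + c z * v z < 0)
    (hle : ∀ z ∈ Ioo s₀ s₁ ×ˢ univ,
      lapl v z.1 z.2 + c z * v z ≤ lapl u z.1 z.2 + c z * u z)
    (hbdry : ∀ t, u (s₀, t) ≤ v (s₀, t) ∧ u (s₁, t) ≤ v (s₁, t)) :
    ∀ z ∈ Icc s₀ s₁ ×ˢ univ, u z ≤ v z := by
  intro z hz
  have hint : interior (Icc s₀ s₁ ×ˢ (univ : Set ℝ)) = Ioo s₀ s₁ ×ˢ univ := by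
    rw [interior_prod_eq, interior_Icc, interior_univ]
  have hmax : ∃ p ∈ Icc s₀ s₁ ×ˢ univ, IsMaxOn (fun z ↦ u z / v z) (Icc s₀ s₁ ×ˢ univ) p :=
    exists_isMaxOn_prod_univ_of_periodic isCompact_Icc ⟨z.1, hz.1⟩ hT
      (hu.div hv fun p hp ↦ (hpos p hp).ne') fun s hs ↦ (hu_per s hs).div (hv_per s hs)
  rw [← hint] at hu₂ hv₂ hneg hle
  refine le_of_lapl_add_mul_le hu₂ hv₂ hmax hpos hneg hle ?_ z hz
  rintro ⟨s, t⟩ ⟨hst, hst_int⟩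
  have hend : s ∈ ({s₀, s₁} : Set ℝ) := by
    rw [← Icc_sdiff_Ioo_same (hz.1.1.trans hz.1.2)]
    exact ⟨hst.1, fun hs ↦ hst_int (hint ▸ ⟨hs, mem_univ t⟩)⟩
  rcases hend with rfl | rfl
  exacts [(hbdry t).1, (hbdry t).2]

theorem exists_lt_sq_and_forall_le_cos_mul {lam δ : ℝ} (hδ : 0 < δ)
    (hδlam : δ ^ 2 * lam < Real.pi ^ 2) :
    ∃ w c : ℝ, lam < w ^ 2 ∧ 0 < c ∧ ∀ x, |x| ≤ δ / 2 → c ≤ Real.cos (w * x) := by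
  have hsqrt : √lam < Real.pi / δ := by
    rw [Real.sqrt_lt' (by positivity), div_pow, lt_div_iff₀' (by positivity)]
    exact hδlam
  obtain ⟨w, hlamw, hwδ⟩ := exists_between hsqrt
  have hw : 0 < w := (Real.sqrt_nonneg lam).trans_lt hlamw
  have hwδ' : w * δ < Real.pi := (lt_div_iff₀ hδ).1 hwδ
  have hwδ_pos : 0 < w * δ := mul_pos hw hδ
  refine ⟨w, Real.cos (w * (δ / 2)), (Real.sqrt_lt' hw).1 hlamw,
    Real.cos_pos_of_mem_Ioo ⟨by linarith, by linarith⟩, fun x hx ↦ ?_⟩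
  rw [← Real.cos_abs (w * x), abs_mul, abs_of_pos hw]
  exact Real.cos_le_cos_of_nonneg_of_le_pi (by positivity) (by linarith) (by gcongr)

theorem exists_pos_le_mul_and_le_mul {𝕜 : Type*} [Field 𝕜] [LinearOrder 𝕜]
    [IsStrictOrderedRing 𝕜] (a b : 𝕜) {p q : 𝕜} (hp : 0 < p) (hq : 0 < q) :
    ∃ C : 𝕜, 0 < C ∧ a ≤ C * p ∧ b ≤ C * q :=
  ((eventually_gt_atTop 0).and
    (((tendsto_id.atTop_mul_const hp).eventually_ge_atTop a).and
      ((tendsto_id.atTop_mul_const hq).eventually_ge_atTop b))).exists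

theorem le_mul_cos_of_lapl_add_mul_nonneg {a b lam w c C m s₀ s₁ T : ℝ} {α : ℝ × ℝ → ℝ}
    (hlam : lam < w ^ 2) (hc : 0 < c) (hC : 0 < C)
    (hcos : ∀ s ∈ Icc s₀ s₁, c ≤ Real.cos (w * (s - m)))
    (ha : a ≤ C * ((w ^ 2 - lam) * c)) (hb : b ≤ C * c) (hT : 0 < T)
    (hcont : ContinuousOn α (Icc s₀ s₁ ×ˢ univ)) (hdiff : ContDiffOn ℝ 2 α (Ioo s₀ s₁ ×ˢ univ))
    (hper : ∀ s ∈ Icc s₀ s₁, Function.Periodic (fun t ↦ α (s, t)) T)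
    (hlapl : ∀ s ∈ Ioo s₀ s₁, ∀ t, 0 ≤ lapl α s t + lam * α (s, t) + a)
    (hbdry : ∀ t, α (s₀, t) ≤ b ∧ α (s₁, t) ≤ b) :
    ∀ s ∈ Icc s₀ s₁, ∀ t, α (s, t) ≤ C * Real.cos (w * (s - m)) := by
  intro s hs t
  let v : ℝ × ℝ → ℝ := fun z ↦ C * Real.cos (w * (z.1 - m))
  have hμ : 0 < w ^ 2 - lam := sub_pos.2 hlam
  have hv_ge : ∀ s ∈ Icc s₀ s₁, ∀ t, C * c ≤ v (s, t) := fun s hs _ ↦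
    mul_le_mul_of_nonneg_left (hcos s hs) hC.le
  have hv_pos : ∀ s ∈ Icc s₀ s₁, ∀ t, 0 < v (s, t) := fun s hs t ↦
    (mul_pos hC hc).trans_le (hv_ge s hs t)
  have hv_lapl (s t : ℝ) : lapl v s t + lam * v (s, t) = -((w ^ 2 - lam) * v (s, t)) := by
    rw [lapl_const_mul, lapl_cos_mul_sub]
    ring
  have hv_neg : ∀ s ∈ Icc s₀ s₁, ∀ t, lapl v s t + lam * v (s, t) < 0 := fun s hs t ↦ by
    rw [hv_lapl, neg_lt_zero]
    exact mul_pos hμ (hv_pos s hs t)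
  have hv_le : ∀ s ∈ Icc s₀ s₁, ∀ t, lapl v s t + lam * v (s, t) ≤ -a := fun s hs t ↦ by
    rw [hv_lapl, neg_le_neg_iff]
    calc
      a ≤ (w ^ 2 - lam) * (C * c) := by rwa [mul_left_comm]
      _ ≤ (w ^ 2 - lam) * v (s, t) := mul_le_mul_of_nonneg_left (hv_ge s hs t) hμ.le
  have hIcc {s : ℝ} (hs : s ∈ Ioo s₀ s₁) : s ∈ Icc s₀ s₁ := Ioo_subset_Icc_self hs
  have hs₀₁ : s₀ ≤ s₁ := hs.1.trans hs.2
  exact le_of_lapl_add_mul_le_of_periodic (v := v) (c := fun _ ↦ lam) hT hcont (by fun_prop) hdiff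
    (by fun_prop) hper (fun _ _ _ ↦ rfl) (fun z hz ↦ hv_pos z.1 hz.1 z.2)
    (fun z hz ↦ hv_neg z.1 (hIcc hz.1) z.2)
    (fun z hz ↦ (hv_le z.1 (hIcc hz.1) z.2).trans (neg_le_iff_add_nonneg.2 (hlapl z.1 hz.1 z.2)))
    (fun t ↦ ⟨(hbdry t).1.trans (hb.trans (hv_ge s₀ (left_mem_Icc.2 hs₀₁) t)),
      (hbdry t).2.trans (hb.trans (hv_ge s₁ (right_mem_Icc.2 hs₀₁) t))⟩)
    (s, t) ⟨hs, mem_univ t⟩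

theorem maximum_principle_cylinder_general (a b lam δ : ℝ) (hδ : 0 < δ)
    (hδlam : δ ^ 2 * lam < Real.pi ^ 2) :
    ∃ C : ℝ, 0 < C ∧ ∀ (s₀ s₁ T : ℝ) (α : ℝ × ℝ → ℝ), s₁ - s₀ ≤ δ → 0 < T →
      ContinuousOn α (Icc s₀ s₁ ×ˢ univ) → ContDiffOn ℝ 2 α (Ioo s₀ s₁ ×ˢ univ) →
      (∀ s ∈ Icc s₀ s₁, Function.Periodic (fun t ↦ α (s, t)) T) →
      (∀ s ∈ Ioo s₀ s₁, ∀ t : ℝ, 0 ≤ lapl α s t + lam * α (s, t) + a) →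
      (∀ t : ℝ, α (s₀, t) ≤ b ∧ α (s₁, t) ≤ b) →
      ∀ s ∈ Icc s₀ s₁, ∀ t : ℝ, α (s, t) ≤ C := by
  obtain ⟨w, c, hlamw, hc, hcos⟩ := exists_lt_sq_and_forall_le_cos_mul hδ hδlam
  obtain ⟨C, hC, haC, hbC⟩ :=
    exists_pos_le_mul_and_le_mul a b (mul_pos (sub_pos.2 hlamw) hc) hc
  refine ⟨C, hC, fun s₀ s₁ T α hlen hT hcont hdiff hper hlapl hbdry s hs t ↦ ?_⟩
  have hcos_mid : ∀ s ∈ Icc s₀ s₁, c ≤ Real.cos (w * (s - (s₀ + s₁) / 2)) := fun s hs ↦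
    hcos _ (abs_le.2 ⟨by linarith [hs.1], by linarith [hs.2]⟩)
  calc
    α (s, t) ≤ C * Real.cos (w * (s - (s₀ + s₁) / 2)) :=
      le_mul_cos_of_lapl_add_mul_nonneg hlamw hc hC hcos_mid haC hbC hT hcont hdiff hper hlapl
        hbdry s hs t
    _ ≤ C := mul_le_of_le_one_right hC.le (Real.cos_le_one _)

/-- **Maximum principle on a finite cylinder** (Floer–Hofer, Proposition 8; Lemma 3.8).
If `δ²λ < π²` there is a constant `C = C(a,b,λ,δ)` bounding any smooth `α` on
`[s₀,s₁] × ℝ/ℤ` (i.e. `1`-periodic in the second variable), where `s₁ - s₀ ≤ δ`,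
which satisfies `Δα + λα + a ≥ 0` and `α ≤ b` on the vertical boundary. -/
theorem maximum_principle_cylinder
    (a b lam δ : ℝ) (ha : 0 ≤ a) (hb : 0 ≤ b) (hlam : 0 ≤ lam) (hδ : 0 < δ)
    (hδlam : δ ^ 2 * lam < Real.pi ^ 2) :
    ∃ C : ℝ, 0 < C ∧ ∀ (s₀ s₁ : ℝ) (α : ℝ × ℝ → ℝ),
      s₀ < s₁ → s₁ - s₀ ≤ δ → ContDiff ℝ (⊤ : ℕ∞) α →
      (∀ s t : ℝ, α (s, t + 1) = α (s, t)) →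
      (∀ s ∈ Icc s₀ s₁, ∀ t : ℝ, 0 ≤ lapl α s t + lam * α (s, t) + a) →
      (∀ t : ℝ, α (s₀, t) ≤ b ∧ α (s₁, t) ≤ b) →
      ∀ s ∈ Icc s₀ s₁, ∀ t : ℝ, α (s, t) ≤ C := by
  obtain ⟨C, hC, hbound⟩ := maximum_principle_cylinder_general a b lam δ hδ hδlam
  exact ⟨C, hC, fun s₀ s₁ α _ hlen hα hper hlapl ↦ hbound s₀ s₁ 1 α hlen one_pos
    hα.continuous.continuousOn (contDiff_infty.1 hα 2).contDiffOn (fun s _ ↦ hper s)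
    fun s hs ↦ hlapl s (Ioo_subset_Icc_self hs)⟩
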